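/- For i = 1,2 let Λᵢ be an integral domain and commutative ℂ-algebra, Ŵᵢ a group of ℂ-algebra automorphisms of Λᵢ, and Wᵢ ⊆ Ŵᵢ a finite subgroup, with symmetrizing idempotents eᵢ = (1/#Wᵢ) Σ_{w∈Wᵢ} w ∈ Lᵢ#Ŵᵢ. Assume Λ = Λ₁ ⊗_ℂ Λ₂ is an integral domain, let Ŵ = Ŵ₁ × Ŵ₂ act componentwise, let ψ: (L₁#Ŵ₁) ⊗_ℂ (L₂#Ŵ₂) → L#Ŵ be the canonical embedding, and let e = ψ(e₁ ⊗ e₂) = (1/#(W₁×W₂)) Σ_{w∈W₁×W₂} w. Then ψ restricts to an injective ℂ-algebra homomorphism from (e₁·𝓕_{Λ₁}·e₁) ⊗_ℂ (e₂·𝓕_{Λ₂}·e₂) into the spherical subalgebra e·𝓕_Λ·e; i.e., the tensor product of the standard Galois orders embeds into the standard Galois order of the tensored data. -/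

import Mathlib

/-!
Statement 12: In the tensor-product setting, with finite subgroups Wᵢ ⊆ Ŵᵢ and
symmetrizing idempotents eᵢ = (1/#Wᵢ) Σ_{w∈Wᵢ} w and e = ψ(e₁ ⊗ e₂) =
(1/#(W₁×W₂)) Σ_{w∈W₁×W₂} w, the canonical embedding ψ restricts to an injective
ℂ-algebra homomorphism (e₁·𝓕_{Λ₁}·e₁) ⊗_ℂ (e₂·𝓕_{Λ₂}·e₂) → e·𝓕_Λ·e.
-/

set_option synthInstance.maxHeartbeats 1000000
set_option maxHeartbeats 1000000

open scoped TensorProduct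

noncomputable section

/-- `gen f w` is the ℂ-linear endomorphism `m_f ∘ w` of `L`. -/
def gen {L : Type*} [Field L] [Algebra ℂ L] (f : L) (w : L ≃ₐ[ℂ] L) : Module.End ℂ L :=
  (LinearMap.mulLeft ℂ f) ∘ₗ (w.toLinearMap)

/-- The skew monoid ring `L # W` realized inside `End_ℂ(L)`. -/
def skew {L : Type*} [Field L] [Algebra ℂ L] (W : Submonoid (L ≃ₐ[ℂ] L)) :
    Subalgebra ℂ (Module.End ℂ L) :=
  Algebra.adjoin ℂ { X | ∃ (f : L) (w : L ≃ₐ[ℂ] L), w ∈ W ∧ X = gen f w }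

lemma gen_mem_skew {L : Type*} [Field L] [Algebra ℂ L] {W : Submonoid (L ≃ₐ[ℂ] L)}
    (f : L) {w : L ≃ₐ[ℂ] L} (hw : w ∈ W) : gen f w ∈ skew W :=
  Algebra.subset_adjoin ⟨f, w, hw, rfl⟩

/-- The standard flag order `𝓕_Λ = {X ∈ L#W : X(Λ) ⊆ Λ}`. -/
def flag {L : Type*} [Field L] [Algebra ℂ L] (Λ : Subalgebra ℂ L)
    (W : Submonoid (L ≃ₐ[ℂ] L)) : Set (Module.End ℂ L) :=
  { X | X ∈ skew W ∧ ∀ a ∈ Λ, X a ∈ Λ }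

/-- The symmetrizing idempotent `(1/#s) Σ_{w ∈ s} w` of a finite set `s` of automorphisms. -/
def symIdem {L : Type*} [Field L] [Algebra ℂ L] (s : Finset (L ≃ₐ[ℂ] L)) : Module.End ℂ L :=
  (s.card : ℂ)⁻¹ • ∑ w ∈ s, gen (1 : L) w

lemma symIdem_mem_skew {L : Type*} [Field L] [Algebra ℂ L] {W : Submonoid (L ≃ₐ[ℂ] L)}
    {s : Finset (L ≃ₐ[ℂ] L)} (hs : ∀ w ∈ s, w ∈ W) : symIdem s ∈ skew W :=
  Subalgebra.smul_mem _ (Subalgebra.sum_mem _ fun w hw => gen_mem_skew 1 (hs w hw)) _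

/-- `Λ = Λ₁ ⊗ Λ₂`, realized inside `L` as the subalgebra generated by `ι₁(Λ₁) ∪ ι₂(Λ₂)`. -/
def tensorSub {L₁ L₂ L : Type*} [Field L₁] [Algebra ℂ L₁] [Field L₂] [Algebra ℂ L₂]
    [Field L] [Algebra ℂ L] (Λ₁ : Subalgebra ℂ L₁) (Λ₂ : Subalgebra ℂ L₂)
    (ι₁ : L₁ →ₐ[ℂ] L) (ι₂ : L₂ →ₐ[ℂ] L) : Subalgebra ℂ L :=
  Algebra.adjoin ℂ ((ι₁ '' (Λ₁ : Set L₁)) ∪ (ι₂ '' (Λ₂ : Set L₂)))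

section SkewMonoidRing

variable {L : Type*} [Field L] [Algebra ℂ L]

lemma gen_apply (f : L) (w : L ≃ₐ[ℂ] L) (x : L) : gen f w x = f * w x := rfl

lemma gen_mul_gen (f g : L) (v w : L ≃ₐ[ℂ] L) : gen f v * gen g w = gen (f * v g) (v * w) := by
  ext x
  simp [gen_apply, mul_assoc]

lemma gen_one_one : gen (1 : L) 1 = 1 := by
  ext x
  simp [gen_apply]

lemma toSubmodule_skew (W : Submonoid (L ≃ₐ[ℂ] L)) :
    Subalgebra.toSubmodule (skew W) =
      Submodule.span ℂ {X | ∃ (f : L) (w : L ≃ₐ[ℂ] L), w ∈ W ∧ X = gen f w} := by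
  let S : Submonoid (Module.End ℂ L) :=
    { carrier := {X | ∃ (f : L) (w : L ≃ₐ[ℂ] L), w ∈ W ∧ X = gen f w}
      one_mem' := ⟨1, 1, W.one_mem, gen_one_one.symm⟩
      mul_mem' := by
        rintro _ _ ⟨f, v, hv, rfl⟩ ⟨g, w, hw, rfl⟩
        exact ⟨_, _, W.mul_mem hv hw, gen_mul_gen f g v w⟩ }
  have hS : (Submonoid.closure {X | ∃ (f : L) (w : L ≃ₐ[ℂ] L), w ∈ W ∧ X = gen f w} :
      Set (Module.End ℂ L)) = S := congrArg SetLike.coe (Submonoid.closure_eq S)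
  rw [skew, Algebra.adjoin_eq_span, hS]
  rfl

/-- The skew monoid ring is spanned by the operators `m_f ∘ w`. -/
lemma span_gen_eq_top (W : Submonoid (L ≃ₐ[ℂ] L)) :
    Submodule.span ℂ {X : skew W | ∃ (f : L) (w : L ≃ₐ[ℂ] L) (hw : w ∈ W),
      X = ⟨gen f w, gen_mem_skew f hw⟩} = ⊤ := by
  apply Submodule.map_injective_of_injective
    (f := (Subalgebra.toSubmodule (skew W)).subtype) Subtype.val_injective
  refine Eq.trans ?_ (Submodule.map_subtype_top _).symm
  refine (Submodule.map_span _ _).trans (Eq.trans ?_ (toSubmodule_skew W).symm)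
  congr 1
  ext X
  constructor
  · rintro ⟨_, ⟨f, w, hw, rfl⟩, rfl⟩
    exact ⟨f, w, hw, rfl⟩
  · rintro ⟨f, w, hw, rfl⟩
    exact ⟨⟨gen f w, gen_mem_skew f hw⟩, ⟨f, w, hw, rfl⟩, rfl⟩

/-- Evaluation of the operators of the skew monoid ring at an element of `L`. -/
def skewEval (W : Submonoid (L ≃ₐ[ℂ] L)) (f : L) : skew W →ₗ[ℂ] L :=
  LinearMap.applyₗ f ∘ₗ (skew W).val.toLinearMap

lemma skewEval_apply (W : Submonoid (L ≃ₐ[ℂ] L)) (f : L) (X : skew W) :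
    skewEval W f X = (X : Module.End ℂ L) f := rfl

lemma symIdem_eq_smul_sum_attach {W : Submonoid (L ≃ₐ[ℂ] L)} {s : Finset (L ≃ₐ[ℂ] L)}
    (hs : ∀ w ∈ s, w ∈ W) :
    (⟨symIdem s, symIdem_mem_skew hs⟩ : skew W) =
      (s.card : ℂ)⁻¹ • ∑ w ∈ s.attach, ⟨gen 1 w.1, gen_mem_skew 1 (hs w.1 w.2)⟩ := by
  apply Subtype.ext
  simp only [Subalgebra.coe_smul, AddSubmonoidClass.coe_finsetSum]
  rw [Finset.sum_attach s fun w => gen (1 : L) w, symIdem]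

/-- The standard flag order as a linear subspace of `End_ℂ(L)`. -/
def flagSubmodule (Λ : Subalgebra ℂ L) (W : Submonoid (L ≃ₐ[ℂ] L)) :
    Submodule ℂ (Module.End ℂ L) where
  carrier := flag Λ W
  zero_mem' := ⟨zero_mem _, fun _ _ => Λ.zero_mem⟩
  add_mem' hX hY := ⟨add_mem hX.1 hY.1, fun a ha => Λ.add_mem (hX.2 a ha) (hY.2 a ha)⟩
  smul_mem' c _ hX := ⟨Subalgebra.smul_mem _ hX.1 c, fun a ha => Λ.smul_mem (hX.2 a ha) c⟩

end SkewMonoidRing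

/-- If the families `p i` and `q j` of linear maps separate the elements of `M` and `N`, then
the maps `p i ⊗ q j` separate the elements of `M ⊗ N`. -/
lemma tensor_ext_of_forall_map_eq {K I J M N P Q : Type*} [Field K]
    [AddCommGroup M] [Module K M] [AddCommGroup N] [Module K N]
    [AddCommGroup P] [Module K P] [AddCommGroup Q] [Module K Q]
    (p : I → M →ₗ[K] P) (q : J → N →ₗ[K] Q)
    (hp : ∀ m, (∀ i, p i m = 0) → m = 0) (hq : ∀ n, (∀ j, q j n = 0) → n = 0)
    (t t' : M ⊗[K] N)
    (h : ∀ i j, TensorProduct.map (p i) (q j) t = TensorProduct.map (p i) (q j) t') : t = t' := by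
  suffices hzero : ∀ t : M ⊗[K] N, (∀ i j, TensorProduct.map (p i) (q j) t = 0) → t = 0 from
    sub_eq_zero.1 (hzero _ fun i j => by rw [map_sub, h i j, sub_self])
  intro t ht
  let b := Module.Basis.ofVectorSpace K N
  obtain ⟨c, rfl⟩ := TensorProduct.eq_repr_basis_right b t
  suffices hc : ∀ k, c k = 0 by
    exact Finset.sum_eq_zero fun k _ => by simp [hc k]
  intro k
  refine hp _ fun i => (Module.forall_dual_apply_eq_zero_iff K _).1 fun φ => ?_
  have hn : ∑ l ∈ c.support, φ (p i (c l)) • b l = 0 := by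
    refine hq _ fun j => ?_
    have := congrArg ((TensorProduct.lid K Q).toLinearMap ∘ₗ φ.rTensor Q) (ht i j)
    simpa [Finsupp.sum] using this
  by_cases hk : k ∈ c.support
  · exact linearIndependent_iff'.1 b.linearIndependent _ _ hn k hk
  · simp [Finsupp.notMem_support_iff.1 hk]

section TensorProductData

variable {L₁ L₂ L : Type*} [Field L₁] [Algebra ℂ L₁] [Field L₂] [Algebra ℂ L₂]
  [Field L] [Algebra ℂ L]

/-- A subspace of `(L₁#W₁) ⊗ (L₂#W₂)` that contains all `(m_f ∘ w₁) ⊗ (m_g ∘ w₂)` is everything. -/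
lemma mem_of_forall_gen_tmul_gen_mem {W₁ : Submonoid (L₁ ≃ₐ[ℂ] L₁)}
    {W₂ : Submonoid (L₂ ≃ₐ[ℂ] L₂)} (P : Submodule ℂ (skew W₁ ⊗[ℂ] skew W₂))
    (hP : ∀ (a : L₁) (b : L₂) (w₁ : L₁ ≃ₐ[ℂ] L₁) (w₂ : L₂ ≃ₐ[ℂ] L₂)
      (h₁ : w₁ ∈ W₁) (h₂ : w₂ ∈ W₂),
      (⟨gen a w₁, gen_mem_skew a h₁⟩ : skew W₁) ⊗ₜ[ℂ]
        (⟨gen b w₂, gen_mem_skew b h₂⟩ : skew W₂) ∈ P)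
    (t : skew W₁ ⊗[ℂ] skew W₂) : t ∈ P := by
  induction t with
  | zero => exact P.zero_mem
  | add x y hx hy => exact P.add_mem hx hy
  | tmul X Y =>
    have hX : X ∈ Submodule.span ℂ _ := span_gen_eq_top W₁ ▸ Submodule.mem_top
    have hY : Y ∈ Submodule.span ℂ _ := span_gen_eq_top W₂ ▸ Submodule.mem_top
    have h := Submodule.apply_mem_map₂ (TensorProduct.mk ℂ _ _) hX hY
    rw [Submodule.map₂_span_span] at h
    refine Submodule.span_le.2 ?_ h
    rintro _ ⟨_, ⟨a, w₁, h₁, rfl⟩, _, ⟨b, w₂, h₂, rfl⟩, rfl⟩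
    exact hP a b w₁ w₂ h₁ h₂

lemma toSubmodule_tensorSub (Λ₁ : Subalgebra ℂ L₁) (Λ₂ : Subalgebra ℂ L₂)
    (ι₁ : L₁ →ₐ[ℂ] L) (ι₂ : L₂ →ₐ[ℂ] L) :
    Subalgebra.toSubmodule (tensorSub Λ₁ Λ₂ ι₁ ι₂) =
      Subalgebra.toSubmodule (Λ₁.map ι₁) * Subalgebra.toSubmodule (Λ₂.map ι₂) := by
  rw [tensorSub, Algebra.adjoin_union_coe_submodule, ← Subalgebra.coe_map, ← Subalgebra.coe_map,
    Algebra.adjoin_eq, Algebra.adjoin_eq]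

lemma mul_mem_tensorSub {Λ₁ : Subalgebra ℂ L₁} {Λ₂ : Subalgebra ℂ L₂}
    (ι₁ : L₁ →ₐ[ℂ] L) (ι₂ : L₂ →ₐ[ℂ] L) {f : L₁} {g : L₂} (hf : f ∈ Λ₁) (hg : g ∈ Λ₂) :
    ι₁ f * ι₂ g ∈ tensorSub Λ₁ Λ₂ ι₁ ι₂ :=
  mul_mem (Algebra.subset_adjoin (Or.inl ⟨f, hf, rfl⟩))
    (Algebra.subset_adjoin (Or.inr ⟨g, hg, rfl⟩))

variable {W₁ : Submonoid (L₁ ≃ₐ[ℂ] L₁)} {W₂ : Submonoid (L₂ ≃ₐ[ℂ] L₂)}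
  {ι₁ : L₁ →ₐ[ℂ] L} {ι₂ : L₂ →ₐ[ℂ] L}
  {ext : ((L₁ ≃ₐ[ℂ] L₁) × (L₂ ≃ₐ[ℂ] L₂)) →* (L ≃ₐ[ℂ] L)}
  {ψ : (skew W₁ ⊗[ℂ] skew W₂) →ₐ[ℂ] Module.End ℂ L}

/-- On `ι(f ⊗ g)`, the operator `ψ t` acts as `t` does on `f ⊗ g`. -/
lemma psi_apply_mul
    (hext : ∀ (p : (L₁ ≃ₐ[ℂ] L₁) × (L₂ ≃ₐ[ℂ] L₂)) (f : L₁) (g : L₂),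
      ext p (ι₁ f * ι₂ g) = ι₁ (p.1 f) * ι₂ (p.2 g))
    (hψ : ∀ (a : L₁) (b : L₂) (w₁ : L₁ ≃ₐ[ℂ] L₁) (w₂ : L₂ ≃ₐ[ℂ] L₂)
        (h₁ : w₁ ∈ W₁) (h₂ : w₂ ∈ W₂),
      ψ (⟨gen a w₁, gen_mem_skew a h₁⟩ ⊗ₜ[ℂ] ⟨gen b w₂, gen_mem_skew b h₂⟩)
        = gen (ι₁ a * ι₂ b) (ext (w₁, w₂)))
    (f : L₁) (g : L₂) (t : skew W₁ ⊗[ℂ] skew W₂) :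
    ψ t (ι₁ f * ι₂ g) = Algebra.TensorProduct.productMap ι₁ ι₂
      (TensorProduct.map (skewEval W₁ f) (skewEval W₂ g) t) := by
  refine mem_of_forall_gen_tmul_gen_mem
    (LinearMap.eqLocus (LinearMap.applyₗ (ι₁ f * ι₂ g) ∘ₗ ψ.toLinearMap)
      ((Algebra.TensorProduct.productMap ι₁ ι₂).toLinearMap ∘ₗ
        TensorProduct.map (skewEval W₁ f) (skewEval W₂ g))) ?_ t
  intro a b w₁ w₂ h₁ h₂
  simp only [LinearMap.mem_eqLocus, LinearMap.comp_apply, AlgHom.toLinearMap_apply,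
    LinearMap.applyₗ_apply_apply, hψ _ _ _ _ h₁ h₂, TensorProduct.map_tmul, skewEval_apply,
    gen_apply, hext, Algebra.TensorProduct.productMap_apply_tmul, map_mul]
  ring

lemma psi_mem_skew
    (hψ : ∀ (a : L₁) (b : L₂) (w₁ : L₁ ≃ₐ[ℂ] L₁) (w₂ : L₂ ≃ₐ[ℂ] L₂)
        (h₁ : w₁ ∈ W₁) (h₂ : w₂ ∈ W₂),
      ψ (⟨gen a w₁, gen_mem_skew a h₁⟩ ⊗ₜ[ℂ] ⟨gen b w₂, gen_mem_skew b h₂⟩)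
        = gen (ι₁ a * ι₂ b) (ext (w₁, w₂)))
    (t : skew W₁ ⊗[ℂ] skew W₂) : ψ t ∈ skew (Submonoid.map ext (W₁.prod W₂)) := by
  refine mem_of_forall_gen_tmul_gen_mem
    ((Subalgebra.toSubmodule (skew (Submonoid.map ext (W₁.prod W₂)))).comap ψ.toLinearMap) ?_ t
  intro a b w₁ w₂ h₁ h₂
  rw [Submodule.mem_comap, AlgHom.toLinearMap_apply, hψ _ _ _ _ h₁ h₂]
  exact gen_mem_skew _ ⟨(w₁, w₂), ⟨h₁, h₂⟩, rfl⟩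

lemma psi_injective (hι : Function.Injective (Algebra.TensorProduct.productMap ι₁ ι₂))
    (hext : ∀ (p : (L₁ ≃ₐ[ℂ] L₁) × (L₂ ≃ₐ[ℂ] L₂)) (f : L₁) (g : L₂),
      ext p (ι₁ f * ι₂ g) = ι₁ (p.1 f) * ι₂ (p.2 g))
    (hψ : ∀ (a : L₁) (b : L₂) (w₁ : L₁ ≃ₐ[ℂ] L₁) (w₂ : L₂ ≃ₐ[ℂ] L₂)
        (h₁ : w₁ ∈ W₁) (h₂ : w₂ ∈ W₂),
      ψ (⟨gen a w₁, gen_mem_skew a h₁⟩ ⊗ₜ[ℂ] ⟨gen b w₂, gen_mem_skew b h₂⟩)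
        = gen (ι₁ a * ι₂ b) (ext (w₁, w₂))) :
    Function.Injective ψ := by
  intro t t' h
  refine tensor_ext_of_forall_map_eq (K := ℂ) (M := skew W₁) (N := skew W₂)
    (skewEval W₁) (skewEval W₂)
    (fun X hX => Subtype.ext (LinearMap.ext hX)) (fun X hX => Subtype.ext (LinearMap.ext hX)) t t'
    fun f g => hι ?_
  rw [← psi_apply_mul hext hψ, ← psi_apply_mul hext hψ, h]

lemma psi_tmul_mem_flag {Λ₁ : Subalgebra ℂ L₁} {Λ₂ : Subalgebra ℂ L₂}
    (hext : ∀ (p : (L₁ ≃ₐ[ℂ] L₁) × (L₂ ≃ₐ[ℂ] L₂)) (f : L₁) (g : L₂),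
      ext p (ι₁ f * ι₂ g) = ι₁ (p.1 f) * ι₂ (p.2 g))
    (hψ : ∀ (a : L₁) (b : L₂) (w₁ : L₁ ≃ₐ[ℂ] L₁) (w₂ : L₂ ≃ₐ[ℂ] L₂)
        (h₁ : w₁ ∈ W₁) (h₂ : w₂ ∈ W₂),
      ψ (⟨gen a w₁, gen_mem_skew a h₁⟩ ⊗ₜ[ℂ] ⟨gen b w₂, gen_mem_skew b h₂⟩)
        = gen (ι₁ a * ι₂ b) (ext (w₁, w₂)))
    {Z₁ : skew W₁} {Z₂ : skew W₂} (hZ₁ : (Z₁ : Module.End ℂ L₁) ∈ flag Λ₁ W₁)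
    (hZ₂ : (Z₂ : Module.End ℂ L₂) ∈ flag Λ₂ W₂) :
    ψ (Z₁ ⊗ₜ Z₂) ∈ flag (tensorSub Λ₁ Λ₂ ι₁ ι₂) (Submonoid.map ext (W₁.prod W₂)) := by
  refine ⟨psi_mem_skew hψ _, fun a ha => ?_⟩
  rw [← Subalgebra.mem_toSubmodule, toSubmodule_tensorSub] at ha
  induction ha using Submodule.mul_induction_on' with
  | mem_mul_mem x hx y hy =>
    obtain ⟨f, hf, rfl⟩ := hx
    obtain ⟨g, hg, rfl⟩ := hy
    have h := psi_apply_mul hext hψ f g (Z₁ ⊗ₜ Z₂)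
    rw [TensorProduct.map_tmul, Algebra.TensorProduct.productMap_apply_tmul] at h
    exact h ▸ mul_mem_tensorSub ι₁ ι₂ (hZ₁.2 f hf) (hZ₂.2 g hg)
  | add x _ y _ hx hy => exact map_add (ψ (Z₁ ⊗ₜ Z₂)) x y ▸ add_mem hx hy

lemma psi_symIdem_tmul_symIdem
    (hψ : ∀ (a : L₁) (b : L₂) (w₁ : L₁ ≃ₐ[ℂ] L₁) (w₂ : L₂ ≃ₐ[ℂ] L₂)
        (h₁ : w₁ ∈ W₁) (h₂ : w₂ ∈ W₂),
      ψ (⟨gen a w₁, gen_mem_skew a h₁⟩ ⊗ₜ[ℂ] ⟨gen b w₂, gen_mem_skew b h₂⟩)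
        = gen (ι₁ a * ι₂ b) (ext (w₁, w₂)))
    {s₁ : Finset (L₁ ≃ₐ[ℂ] L₁)} {s₂ : Finset (L₂ ≃ₐ[ℂ] L₂)}
    (hs₁ : ∀ w ∈ s₁, w ∈ W₁) (hs₂ : ∀ w ∈ s₂, w ∈ W₂) :
    ψ ((⟨symIdem s₁, symIdem_mem_skew hs₁⟩ : skew W₁) ⊗ₜ[ℂ]
        (⟨symIdem s₂, symIdem_mem_skew hs₂⟩ : skew W₂)) =
      ((s₁.card * s₂.card : ℂ))⁻¹ • ∑ v ∈ s₁, ∑ u ∈ s₂, gen (1 : L) (ext (v, u)) := by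
  rw [symIdem_eq_smul_sum_attach hs₁, symIdem_eq_smul_sum_attach hs₂, TensorProduct.smul_tmul_smul,
    map_smul, TensorProduct.sum_tmul, map_sum, mul_inv]
  simp only [TensorProduct.tmul_sum, map_sum]
  rw [← Finset.sum_attach s₁]
  simp only [← Finset.sum_attach s₂]
  congr 1
  refine Finset.sum_congr rfl fun v _ => Finset.sum_congr rfl fun u _ => ?_
  rw [hψ _ _ _ _ (hs₁ v.1 v.2) (hs₂ u.1 u.2), map_one, map_one, mul_one]

end TensorProductData

theorem tensor_embedding_of_standard_Galois_orders
    {L₁ L₂ L : Type*} [Field L₁] [Algebra ℂ L₁] [Field L₂] [Algebra ℂ L₂]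
    [Field L] [Algebra ℂ L]
    (Λ₁ : Subalgebra ℂ L₁) (Λ₂ : Subalgebra ℂ L₂)
    [IsFractionRing Λ₁ L₁] [IsFractionRing Λ₂ L₂]
    (Wg₁ : Subgroup (L₁ ≃ₐ[ℂ] L₁)) (Wg₂ : Subgroup (L₂ ≃ₐ[ℂ] L₂))
    (hW₁ : ∀ w ∈ Wg₁, ∀ x : L₁, x ∈ Λ₁ ↔ w x ∈ Λ₁)
    (hW₂ : ∀ w ∈ Wg₂, ∀ x : L₂, x ∈ Λ₂ ↔ w x ∈ Λ₂)
    -- finite subgroups V₁ ⊆ Ŵ₁, V₂ ⊆ Ŵ₂, enumerated by s₁, s₂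
    (V₁ : Subgroup (L₁ ≃ₐ[ℂ] L₁)) (hV₁ : V₁ ≤ Wg₁)
    (V₂ : Subgroup (L₂ ≃ₐ[ℂ] L₂)) (hV₂ : V₂ ≤ Wg₂)
    (s₁ : Finset (L₁ ≃ₐ[ℂ] L₁)) (hs₁ : ∀ w, w ∈ s₁ ↔ w ∈ V₁)
    (s₂ : Finset (L₂ ≃ₐ[ℂ] L₂)) (hs₂ : ∀ w, w ∈ s₂ ↔ w ∈ V₂)
    (ι₁ : L₁ →ₐ[ℂ] L) (ι₂ : L₂ →ₐ[ℂ] L)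
    (hι : Function.Injective (Algebra.TensorProduct.productMap ι₁ ι₂))
    (hfrac : ∀ x : L, ∃ a ∈ tensorSub Λ₁ Λ₂ ι₁ ι₂, ∃ b ∈ tensorSub Λ₁ Λ₂ ι₁ ι₂,
      b ≠ 0 ∧ x = a / b)
    (ext : ((L₁ ≃ₐ[ℂ] L₁) × (L₂ ≃ₐ[ℂ] L₂)) →* (L ≃ₐ[ℂ] L))
    (hext : ∀ (p : (L₁ ≃ₐ[ℂ] L₁) × (L₂ ≃ₐ[ℂ] L₂)) (f : L₁) (g : L₂),
      ext p (ι₁ f * ι₂ g) = ι₁ (p.1 f) * ι₂ (p.2 g))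
    -- the canonical embedding ψ
    (ψ : (↥(skew Wg₁.toSubmonoid) ⊗[ℂ] ↥(skew Wg₂.toSubmonoid)) →ₐ[ℂ] Module.End ℂ L)
    (hψ : ∀ (a : L₁) (b : L₂) (w₁ : L₁ ≃ₐ[ℂ] L₁) (w₂ : L₂ ≃ₐ[ℂ] L₂)
        (h₁ : w₁ ∈ Wg₁) (h₂ : w₂ ∈ Wg₂),
      ψ (⟨gen a w₁, gen_mem_skew a h₁⟩ ⊗ₜ[ℂ] ⟨gen b w₂, gen_mem_skew b h₂⟩)
        = gen (ι₁ a * ι₂ b) (ext (w₁, w₂))) :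
    -- e = ψ(e₁ ⊗ e₂) = (1/#(W₁ × W₂)) Σ_{w ∈ W₁ × W₂} w :
    (ψ ((⟨symIdem s₁, symIdem_mem_skew fun w hw => hV₁ ((hs₁ w).1 hw)⟩ : skew Wg₁.toSubmonoid)
        ⊗ₜ[ℂ] (⟨symIdem s₂, symIdem_mem_skew fun w hw => hV₂ ((hs₂ w).1 hw)⟩ : skew Wg₂.toSubmonoid))
      = ((s₁.card * s₂.card : ℂ))⁻¹ • ∑ v ∈ s₁, ∑ u ∈ s₂, gen (1 : L) (ext (v, u))) ∧
    -- ψ maps the span of e₁𝓕₁e₁ ⊗ e₂𝓕₂e₂ into e·𝓕_Λ·e :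
    (∀ t ∈ Submodule.span ℂ
        { t : ↥(skew Wg₁.toSubmonoid) ⊗[ℂ] ↥(skew Wg₂.toSubmonoid) |
          ∃ (X₁ : skew Wg₁.toSubmonoid) (X₂ : skew Wg₂.toSubmonoid),
            ((X₁ : Module.End ℂ L₁) ∈
              {y | ∃ Z ∈ flag Λ₁ Wg₁.toSubmonoid, y = symIdem s₁ * Z * symIdem s₁}) ∧
            ((X₂ : Module.End ℂ L₂) ∈
              {y | ∃ Z ∈ flag Λ₂ Wg₂.toSubmonoid, y = symIdem s₂ * Z * symIdem s₂}) ∧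
            t = X₁ ⊗ₜ[ℂ] X₂ },
      ∃ Z ∈ flag (tensorSub Λ₁ Λ₂ ι₁ ι₂)
          (Submonoid.map ext (Wg₁.toSubmonoid.prod Wg₂.toSubmonoid)),
        ψ t = (((s₁.card * s₂.card : ℂ))⁻¹ • ∑ v ∈ s₁, ∑ u ∈ s₂, gen (1 : L) (ext (v, u))) * Z *
          (((s₁.card * s₂.card : ℂ))⁻¹ • ∑ v ∈ s₁, ∑ u ∈ s₂, gen (1 : L) (ext (v, u)))) ∧
    -- and is injective there:
    (∀ t₁ ∈ Submodule.span ℂ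
        { t : ↥(skew Wg₁.toSubmonoid) ⊗[ℂ] ↥(skew Wg₂.toSubmonoid) |
          ∃ (X₁ : skew Wg₁.toSubmonoid) (X₂ : skew Wg₂.toSubmonoid),
            ((X₁ : Module.End ℂ L₁) ∈
              {y | ∃ Z ∈ flag Λ₁ Wg₁.toSubmonoid, y = symIdem s₁ * Z * symIdem s₁}) ∧
            ((X₂ : Module.End ℂ L₂) ∈
              {y | ∃ Z ∈ flag Λ₂ Wg₂.toSubmonoid, y = symIdem s₂ * Z * symIdem s₂}) ∧
            t = X₁ ⊗ₜ[ℂ] X₂ },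
      ∀ t₂ ∈ Submodule.span ℂ
        { t : ↥(skew Wg₁.toSubmonoid) ⊗[ℂ] ↥(skew Wg₂.toSubmonoid) |
          ∃ (X₁ : skew Wg₁.toSubmonoid) (X₂ : skew Wg₂.toSubmonoid),
            ((X₁ : Module.End ℂ L₁) ∈
              {y | ∃ Z ∈ flag Λ₁ Wg₁.toSubmonoid, y = symIdem s₁ * Z * symIdem s₁}) ∧
            ((X₂ : Module.End ℂ L₂) ∈
              {y | ∃ Z ∈ flag Λ₂ Wg₂.toSubmonoid, y = symIdem s₂ * Z * symIdem s₂}) ∧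
            t = X₁ ⊗ₜ[ℂ] X₂ },
      ψ t₁ = ψ t₂ → t₁ = t₂) := by
  have he := psi_symIdem_tmul_symIdem (W₁ := Wg₁.toSubmonoid) (W₂ := Wg₂.toSubmonoid) hψ
    (fun w hw => hV₁ ((hs₁ w).1 hw)) (fun w hw => hV₂ ((hs₂ w).1 hw))
  refine ⟨he, fun t ht => ?_, fun t₁ _ t₂ _ h =>
    psi_injective (W₁ := Wg₁.toSubmonoid) (W₂ := Wg₂.toSubmonoid) hι hext hψ h⟩
  rw [← he]
  induction ht using Submodule.span_induction with
  | mem t ht =>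
    obtain ⟨X₁, X₂, ⟨Z₁, hZ₁, hX₁⟩, ⟨Z₂, hZ₂, hX₂⟩, rfl⟩ := ht
    refine ⟨ψ ((⟨Z₁, hZ₁.1⟩ : skew Wg₁.toSubmonoid) ⊗ₜ (⟨Z₂, hZ₂.1⟩ : skew Wg₂.toSubmonoid)),
      psi_tmul_mem_flag (W₁ := Wg₁.toSubmonoid) (W₂ := Wg₂.toSubmonoid) hext hψ hZ₁ hZ₂, ?_⟩
    rw [← map_mul, ← map_mul, Algebra.TensorProduct.tmul_mul_tmul,
      Algebra.TensorProduct.tmul_mul_tmul]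
    congr 2
    · exact Subtype.ext hX₁
    · exact Subtype.ext hX₂
  | zero => exact ⟨0, (flagSubmodule _ _).zero_mem, by simp⟩
  | add x y _ _ hx hy =>
    obtain ⟨Z, hZ, hx⟩ := hx
    obtain ⟨Z', hZ', hy⟩ := hy
    exact ⟨Z + Z', (flagSubmodule _ _).add_mem hZ hZ', by rw [map_add, hx, hy, mul_add, add_mul]⟩
  | smul c x _ hx =>
    obtain ⟨Z, hZ, hx⟩ := hx
    exact ⟨c • Z, (flagSubmodule _ _).smul_mem c hZ, by
      rw [map_smul, hx, mul_smul_comm, smul_mul_assoc]⟩
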